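/- Suppose the positive integers s₁ and s₂ satisfy: s₁² > (3n−1)m·s₁·s₂ + 3n·s₁ + m²·s₂² + 9m(n−1)·s₂; s₁·s₂ > 3n·s₁ + m²·s₂² + 9m(n−1)·s₂; and s₁ > m²·s₂² + 9m(n−1)·s₂. Then the sink of the transitive tournament induced by F_n is a Slater winner of T_φ if and only if there exists a satisfying assignment of φ that sets x_n to True and whose weight is maximum among all satisfying assignments of φ. -/

import Mathlib

/-! ### The tournament `T_φ` of the reduction

A CNF formula `φ` with variables `x_1, …, x_n` and clauses `c_1, …, c_m` in which no
variable occurs twice in a clause is given by its occurrence function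
`occ : Fin n → Fin m → Option Bool`, where `occ i j = some true` (resp. `some false`)
means `x_i` occurs positively (resp. negatively) in `c_j`, and `none` means `x_i`
does not occur in `c_j`. -/

/-- The names of the `6n + m` modules of the tournament `T_φ`. -/
inductive ModName (n m : ℕ) : Type where
  | A : Fin n → ModName n m
  | B : Fin n → ModName n m
  | C : Fin n → ModName n m
  | D : Fin n → ModName n m
  | E : Fin n → ModName n m
  | F : Fin n → ModName n m
  | T : Fin m → ModName n m
  deriving DecidableEq, Fintype

/-- The group (variable index) of a module, if it is a variable module. -/
def grp? {n m : ℕ} : ModName n m → Option (Fin n)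
  | .A i => some i
  | .B i => some i
  | .C i => some i
  | .D i => some i
  | .E i => some i
  | .F i => some i
  | .T _ => none

/-- The clause index of a module, if it is a clause module. -/
def clause? {n m : ℕ} : ModName n m → Option (Fin m)
  | .T j => some j
  | _ => none

/-- The rank of a module within its group: `A = 0, B = 1, C = 2, D = 3, E = 4, F = 5`. -/
def rk {n m : ℕ} : ModName n m → ℕ
  | .A _ => 0
  | .B _ => 1
  | .C _ => 2
  | .D _ => 3
  | .E _ => 4
  | .F _ => 5
  | .T _ => 6

/-- The size of each module: `A_i, B_i, C_i, D_i, F_i` have size `s₁`; `E_i` has size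
`s₁ + 2` for `i < n` and `s₁ + 3` for `i = n` (i.e. index `n - 1`); `T_j` has size `s₂`. -/
def msize (n m s₁ s₂ : ℕ) : ModName n m → ℕ
  | .A _ => s₁
  | .B _ => s₁
  | .C _ => s₁
  | .D _ => s₁
  | .E i => if (i : ℕ) = n - 1 then s₁ + 3 else s₁ + 2
  | .F _ => s₁
  | .T _ => s₂

/-- The vertex set of `T_φ`: a vertex is a module name together with an index inside
the module. -/
abbrev Vtx (n m s₁ s₂ : ℕ) : Type := Σ M : ModName n m, Fin (msize n m s₁ s₂ M)

/-- Whether all arcs go from `T_j` to the variable module of rank `r` of a group `i`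
with `occ i j = o`: if `x_i` does not occur in `c_j`, `T_j` beats `A_i ∪ B_i ∪ C_i`
(ranks 0,1,2); if positively, `T_j` beats `A_i ∪ B_i ∪ F_i` (ranks 0,1,5); if
negatively, `T_j` beats `A_i ∪ C_i ∪ D_i` (ranks 0,2,3). -/
def tBeats : Option Bool → ℕ → Prop
  | none, r => r = 0 ∨ r = 1 ∨ r = 2
  | some true, r => r = 0 ∨ r = 1 ∨ r = 5
  | some false, r => r = 0 ∨ r = 2 ∨ r = 3

/-- The direction of the arcs between two distinct modules of `T_φ`. -/
def modArc {n m : ℕ} (occ : Fin n → Fin m → Option Bool) (M M' : ModName n m) : Prop :=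
  (∃ i i' : Fin n, grp? M = some i ∧ grp? M' = some i' ∧
    (i < i' ∨ (i = i' ∧ ((rk M < rk M' ∧ ¬(rk M = 3 ∧ rk M' = 5)) ∨
      (rk M = 5 ∧ rk M' = 3))))) ∨
  (∃ j j' : Fin m, clause? M = some j ∧ clause? M' = some j' ∧ j < j') ∨
  (∃ j : Fin m, ∃ i : Fin n, clause? M = some j ∧ grp? M' = some i ∧
    tBeats (occ i j) (rk M')) ∨
  (∃ i : Fin n, ∃ j : Fin m, grp? M = some i ∧ clause? M' = some j ∧
    ¬ tBeats (occ i j) (rk M))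

/-- The arc relation of the tournament `T_φ`: inside a module, arcs follow the
transitive order of the indices; between distinct modules, arcs are given by `modArc`. -/
def arc {n m s₁ s₂ : ℕ} (occ : Fin n → Fin m → Option Bool) :
    Vtx n m s₁ s₂ → Vtx n m s₁ s₂ → Prop :=
  fun u v => (u.1 = v.1 ∧ (u.2 : ℕ) < (v.2 : ℕ)) ∨ (u.1 ≠ v.1 ∧ modArc occ u.1 v.1)

/-- The set of vertices of a module. -/
def mset {n m s₁ s₂ : ℕ} (M : ModName n m) : Set (Vtx n m s₁ s₂) := {v | v.1 = M}

/-- The set of vertices of group `i`: `A_i ∪ B_i ∪ C_i ∪ D_i ∪ E_i ∪ F_i`. -/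
def gset {n m s₁ s₂ : ℕ} (i : Fin n) : Set (Vtx n m s₁ s₂) := {v | grp? v.1 = some i}

/-- The sink of the transitive tournament induced by the module `F_n`. -/
def fnSink (n m s₁ s₂ : ℕ) (hn : 0 < n) (hs₁ : 0 < s₁) : Vtx n m s₁ s₂ :=
  ⟨.F ⟨n - 1, Nat.sub_lt hn one_pos⟩, ⟨s₁ - 1, Nat.sub_lt hs₁ one_pos⟩⟩

/-- The feedback arc set implied by an ordering `r`. -/
def fasSet {V : Type*} (A r : V → V → Prop) : Set (V × V) := {p | A p.1 p.2 ∧ r p.2 p.1}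

/-- `r` is an optimal ordering: a strict linear order whose implied feedback arc set
has minimum size. -/
def IsOptimalOrder {V : Type*} (A r : V → V → Prop) : Prop :=
  IsStrictTotalOrder V r ∧
    ∀ r' : V → V → Prop, IsStrictTotalOrder V r' → (fasSet A r).ncard ≤ (fasSet A r').ncard

/-- `r` places `v` last. -/
def PlacesLast {V : Type*} (r : V → V → Prop) (v : V) : Prop := ∀ u, u ≠ v → r u v

/-- `v` is a Slater winner: some optimal order places `v` last. -/
def SlaterWinner {V : Type*} (A : V → V → Prop) (v : V) : Prop :=
  ∃ r : V → V → Prop, IsOptimalOrder A r ∧ PlacesLast r v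

/-- The assignment `σ` satisfies clause `c_j`. -/
def SatClause {n m : ℕ} (occ : Fin n → Fin m → Option Bool) (σ : Fin n → Bool)
    (j : Fin m) : Prop :=
  ∃ i : Fin n, (occ i j = some true ∧ σ i = true) ∨ (occ i j = some false ∧ σ i = false)

/-- The assignment `σ` satisfies `φ`. -/
def Sat {n m : ℕ} (occ : Fin n → Fin m → Option Bool) (σ : Fin n → Bool) : Prop :=
  ∀ j : Fin m, SatClause occ σ j

/-- The weight of a truth assignment: the number of variables set to `true`. -/
def wt {n : ℕ} (σ : Fin n → Bool) : ℕ := (Finset.univ.filter (fun i => σ i = true)).card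

/-- Every element of `S` comes before every element of `S'` in the order `r`. -/
def Before {V : Type*} (r : V → V → Prop) (S S' : Set V) : Prop := ∀ u ∈ S, ∀ v ∈ S', r u v

/-- `S` is contiguous in the ordering `r`. -/
def Contig {V : Type*} (r : V → V → Prop) (S : Set V) : Prop :=
  ¬ ∃ x ∈ S, ∃ y ∈ S, ∃ z, z ∉ S ∧ r x z ∧ r z y

/-- A linear order on the vertices of `T_φ` is structured if every module is contiguous,
groups appear in increasing order, within each group `A_i ≺ B_i ≺ C_i` come before
`D_i ∪ E_i ∪ F_i`, and the last three modules appear in one of the cyclic orders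
`D_i ≺ E_i ≺ F_i`, `E_i ≺ F_i ≺ D_i`, `F_i ≺ D_i ≺ E_i`. -/
def Structured {n m s₁ s₂ : ℕ} (r : Vtx n m s₁ s₂ → Vtx n m s₁ s₂ → Prop) : Prop :=
  (∀ M : ModName n m, Contig r (mset M)) ∧
  (∀ i i' : Fin n, i < i' → Before r (gset i) (gset i')) ∧
  (∀ i : Fin n,
    Before r (mset (.A i)) (mset (.B i)) ∧
    Before r (mset (.B i)) (mset (.C i)) ∧
    Before r (mset (.A i) ∪ mset (.B i) ∪ mset (.C i))
      (mset (.D i) ∪ mset (.E i) ∪ mset (.F i))) ∧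
  (∀ i : Fin n,
    (Before r (mset (.D i)) (mset (.E i)) ∧ Before r (mset (.E i)) (mset (.F i))) ∨
    (Before r (mset (.E i)) (mset (.F i)) ∧ Before r (mset (.F i)) (mset (.D i))) ∨
    (Before r (mset (.F i)) (mset (.D i)) ∧ Before r (mset (.D i)) (mset (.E i))))

/-- `σ` is the assignment extracted from the structured order `r`: `x_i` is set to true
iff `D_i ≺ E_i ≺ F_i`. -/
def Extracted {n m s₁ s₂ : ℕ} (r : Vtx n m s₁ s₂ → Vtx n m s₁ s₂ → Prop)
    (σ : Fin n → Bool) : Prop :=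
  ∀ i : Fin n, σ i = true ↔
    (Before r (mset (.D i)) (mset (.E i)) ∧ Before r (mset (.E i)) (mset (.F i)))

/-!
Averaging over all choices of one vertex per module shows that only orders listing the modules one
after the other matter, so the problem becomes one about orders of the `6n + m` modules, an arc
between two modules being weighted by the product of their sizes.

Each group contains the cycle `D → E → F → D`, which costs at least `s₁ ^ 2`. The first inequality
forbids a cost of `s₁ ^ 2` beyond these, so in an optimal order the groups appear in order and each
reads `A B C` followed by `DEF`, `EFD` or `FDE`. A clause module then costs at least
`(3 * n - 1) * s₁ * s₂` against the groups, and less than `3 * n * s₁ * s₂` only if it sits just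
before the last module of a group in the order `DEF` whose variable occurs positively, or in the
order `EFD` whose variable occurs negatively. The second inequality forces this for every clause,
so the order encodes a satisfying assignment. The back arc `F → D` of a true variable avoids the
larger module `E`, and by the third inequality the excess sizes of the `E_i` with `x_i` false decide
among the satisfying assignments. Since the excess is `2`, but `3` for `i = n`, an optimal order
maximizes the weight and then, among the assignments of maximum weight, prefers those with `x_n`
true; these are the orders with `F_n` last.
-/

/-! ### Orders of a blow-up -/

section BlowUp

variable {ι : Type*} {κ : ι → Type*}

/-- The order induced on the modules `i : ι` by a choice of one representative in each module `κ i`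
of an ordered disjoint union. -/
def sampleOrder (r : (Σ i, κ i) → (Σ i, κ i) → Prop) (f : ∀ i, κ i) : ι → ι → Prop :=
  (fun i => (⟨i, f i⟩ : Σ i, κ i)) ⁻¹'o r

instance (r : (Σ i, κ i) → (Σ i, κ i) → Prop) [IsStrictTotalOrder _ r] (f : ∀ i, κ i) :
    IsStrictTotalOrder ι (sampleOrder r f) :=
  (RelEmbedding.preimage ⟨_, fun _ _ h => congrArg Sigma.fst h⟩ r).isStrictTotalOrder

/-- The blow-up of `R` in which each vertex `i` is replaced by the transitive tournament on the
linearly ordered set `κ i`. -/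
def BlowUp [∀ i, LT (κ i)] (R : ι → ι → Prop) : (Σ i, κ i) → (Σ i, κ i) → Prop :=
  Sigma.Lex R fun _ => (· < ·)

lemma blowUp_mk_of_ne [∀ i, LT (κ i)] {R : ι → ι → Prop} {x y : ι} (hxy : x ≠ y) (a : κ x)
    (b : κ y) : BlowUp R ⟨x, a⟩ ⟨y, b⟩ ↔ R x y := by
  simp [BlowUp, Sigma.lex_iff, hxy]

lemma blowUp_mk_same [∀ i, LT (κ i)] {R : ι → ι → Prop} [Std.Irrefl R] {x : ι} (a b : κ x) :
    BlowUp R ⟨x, a⟩ ⟨x, b⟩ ↔ a < b := by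
  simp [BlowUp, Sigma.lex_iff, irrefl_of R x]

instance [∀ i, LinearOrder (κ i)] (q : ι → ι → Prop) [IsStrictTotalOrder ι q] :
    IsStrictTotalOrder (Σ i, κ i) (BlowUp q) :=
  have : IsStrictTotalOrder (Σ i, κ i) (Sigma.Lex q fun _ => (· < ·)) := { }
  this

variable [Fintype ι]

open Classical in
/-- The contribution of the pair `(x, y)` to the feedback arc set implied by `q` when each vertex
`z` of `R` stands for `w z` vertices. -/
noncomputable def backWeight (w : ι → ℕ) (R q : ι → ι → Prop) (x y : ι) : ℕ :=
  if R x y ∧ q y x then w x * w y else 0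

/-- The weight of the feedback arc set implied by `q`, an arc `(x, y)` counting `w x * w y`. -/
noncomputable def fasWeight (w : ι → ℕ) (R q : ι → ι → Prop) : ℕ :=
  ∑ x, ∑ y, backWeight w R q x y

/-- The analogue of `IsOptimalOrder` for feedback arc sets measured by `fasWeight`. -/
def IsMinWeightOrder (w : ι → ℕ) (R q : ι → ι → Prop) : Prop :=
  IsStrictTotalOrder ι q ∧
    ∀ q' : ι → ι → Prop, IsStrictTotalOrder ι q' → fasWeight w R q ≤ fasWeight w R q'

lemma exists_isMinWeightOrder (w : ι → ℕ) (R : ι → ι → Prop) : ∃ q, IsMinWeightOrder w R q :=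
  have ⟨q, hq, hmin⟩ := Set.exists_min_image {q : ι → ι → Prop | IsStrictTotalOrder ι q}
    (fasWeight w R) (Set.toFinite _)
    ⟨WellOrderingRel, inferInstanceAs (IsStrictTotalOrder ι WellOrderingRel)⟩
  ⟨q, hq, hmin⟩

lemma ncard_fasSet (A r : ι → ι → Prop) : (fasSet A r).ncard = fasWeight 1 A r := by
  classical
  have hcoe : fasSet A r = ({p | A p.1 p.2 ∧ r p.2 p.1} : Finset (ι × ι)) := by
    ext p
    simp only [fasSet, Set.mem_ofPred_eq, Finset.coe_filter, Finset.mem_univ, true_and]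
  simp only [hcoe, Set.ncard_coe_finset, Finset.card_filter, Fintype.sum_prod_type, fasWeight,
    backWeight, Pi.one_apply, mul_one]

variable [∀ i, Fintype (κ i)]

-- Exchanging `(f x, f y)` with `(a, b)` is an involution on the triples `(f, a, b)`.
lemma card_smul_sum_apply_apply [DecidableEq ι] {M : Type*} [AddCommMonoid M] {x y : ι}
    (hxy : x ≠ y) (g : κ x → κ y → M) :
    (Fintype.card (κ x) * Fintype.card (κ y)) • ∑ f : ∀ i, κ i, g (f x) (f y) =
      Fintype.card (∀ i, κ i) • ∑ a, ∑ b, g a b := by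
  let swap : (∀ i, κ i) × κ x × κ y → (∀ i, κ i) × κ x × κ y := fun p =>
    (Function.update (Function.update p.1 x p.2.1) y p.2.2, p.1 x, p.1 y)
  have hswap : Function.Involutive swap := by
    rintro ⟨f, a, b⟩
    simp [swap, hxy, Function.update_comm hxy.symm]
  have hsum : ∑ p : (∀ i, κ i) × κ x × κ y, g (p.1 x) (p.1 y) =
      ∑ p : (∀ i, κ i) × κ x × κ y, g p.2.1 p.2.2 :=
    Fintype.sum_equiv hswap.toPerm _ _ fun _ => rfl
  simpa only [Fintype.sum_prod_type, Finset.sum_const, Finset.card_univ, ← Finset.smul_sum,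
    Fintype.card_prod] using hsum

variable [∀ i, LinearOrder (κ i)] {R : ι → ι → Prop}

lemma ncard_fasSet_blowUp (r : (Σ i, κ i) → (Σ i, κ i) → Prop) :
    (fasSet (BlowUp R) r).ncard =
      ∑ x, ∑ y, ∑ a, ∑ b, backWeight 1 (BlowUp R) r ⟨x, a⟩ ⟨y, b⟩ := by
  simp only [ncard_fasSet, fasWeight, Fintype.sum_sigma]
  exact Finset.sum_congr rfl fun x _ => Finset.sum_comm

lemma ncard_fasSet_blowUp_blowUp [Std.Irrefl R] (q : ι → ι → Prop) [IsStrictTotalOrder ι q] :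
    (fasSet (BlowUp R) (BlowUp (κ := κ) q)).ncard =
      fasWeight (fun i => Fintype.card (κ i)) R q := by
  rw [ncard_fasSet_blowUp]
  refine Finset.sum_congr rfl fun x _ => Finset.sum_congr rfl fun y _ => ?_
  rcases eq_or_ne x y with rfl | hxy
  · have hback (a b : κ x) : ¬(a < b ∧ b < a) := fun h => lt_asymm h.1 h.2
    simp [backWeight, blowUp_mk_same, irrefl_of q x, hback]
  · have hback (a : κ x) (b : κ y) : backWeight 1 (BlowUp R) (BlowUp q) ⟨x, a⟩ ⟨y, b⟩ =
        backWeight 1 R q x y := by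
      rw [backWeight, backWeight, blowUp_mk_of_ne hxy, blowUp_mk_of_ne hxy.symm]
      rfl
    simp only [hback]
    simp [backWeight]

/-- Averaging over all choices of representatives, an arc between distinct modules `x` and `y` is a
back arc of `sampleOrder r f` with the frequency of back arcs of `r` between `κ x` and `κ y`. -/
lemma sum_fasWeight_sampleOrder_le [DecidableEq ι] (r : (Σ i, κ i) → (Σ i, κ i) → Prop)
    [IsStrictTotalOrder _ r] :
    ∑ f : ∀ i, κ i, fasWeight (fun i => Fintype.card (κ i)) R (sampleOrder r f) ≤
      Fintype.card (∀ i, κ i) * (fasSet (BlowUp R) r).ncard := by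
  simp only [ncard_fasSet_blowUp, fasWeight]
  rw [Finset.sum_comm, Finset.mul_sum]
  refine Finset.sum_le_sum fun x _ => ?_
  rw [Finset.sum_comm, Finset.mul_sum]
  refine Finset.sum_le_sum fun y _ => ?_
  rcases eq_or_ne x y with rfl | hxy
  · simp [backWeight, irrefl_of (sampleOrder r _) x]
  · rw [← smul_eq_mul, ← card_smul_sum_apply_apply hxy, smul_eq_mul, Finset.mul_sum]
    refine Finset.sum_le_sum fun f _ => ?_
    rw [backWeight, backWeight, blowUp_mk_of_ne hxy, mul_ite]
    simp only [Pi.one_apply, mul_one, mul_zero]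
    exact le_rfl

lemma IsMinWeightOrder.isOptimalOrder_blowUp [∀ i, Nonempty (κ i)] [Std.Irrefl R]
    {q : ι → ι → Prop} (hq : IsMinWeightOrder (fun i => Fintype.card (κ i)) R q) :
    IsOptimalOrder (BlowUp (κ := κ) R) (BlowUp q) := by
  classical
  have := hq.1
  refine ⟨inferInstance, fun r hr => ?_⟩
  rw [ncard_fasSet_blowUp_blowUp]
  refine Nat.le_of_mul_le_mul_left ?_ (Fintype.card_pos : 0 < Fintype.card (∀ i, κ i))
  refine le_trans ?_ (sum_fasWeight_sampleOrder_le r)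
  exact Finset.card_nsmul_le_sum _ _ _ fun f _ => hq.2 _ inferInstance

lemma IsOptimalOrder.isMinWeightOrder_sampleOrder [Std.Irrefl R]
    {r : (Σ i, κ i) → (Σ i, κ i) → Prop} (hr : IsOptimalOrder (BlowUp R) r) (f : ∀ i, κ i) :
    IsMinWeightOrder (fun i => Fintype.card (κ i)) R (sampleOrder r f) := by
  classical
  have := hr.1
  have hle (q) (hq : IsStrictTotalOrder ι q) :
      (fasSet (BlowUp R) r).ncard ≤ fasWeight (fun i => Fintype.card (κ i)) R q := by
    rw [← ncard_fasSet_blowUp_blowUp]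
    exact hr.2 _ inferInstance
  refine ⟨inferInstance, fun q hq => le_trans ?_ (hle q hq)⟩
  by_contra! hlt
  refine (sum_fasWeight_sampleOrder_le (R := R) r).not_gt ?_
  rw [← smul_eq_mul, ← Finset.card_univ, ← Finset.sum_const]
  exact Finset.sum_lt_sum (fun g _ => hle _ inferInstance) ⟨f, Finset.mem_univ f, hlt⟩

theorem slaterWinner_blowUp_iff [∀ i, Nonempty (κ i)] [Std.Irrefl R] {x : ι} {a : κ x}
    (ha : IsTop a) :
    SlaterWinner (BlowUp R) (⟨x, a⟩ : Σ i, κ i) ↔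
      ∃ q, IsMinWeightOrder (fun i => Fintype.card (κ i)) R q ∧ PlacesLast q x := by
  classical
  constructor
  · rintro ⟨r, hr, hlast⟩
    let f : ∀ i, κ i := Function.update (fun i => Classical.arbitrary (κ i)) x a
    refine ⟨sampleOrder r f, hr.isMinWeightOrder_sampleOrder f, fun y hy => ?_⟩
    simpa [sampleOrder, Order.Preimage, f] using hlast ⟨y, f y⟩ fun h => hy (congrArg Sigma.fst h)
  · rintro ⟨q, hq, hlast⟩
    have := hq.1
    refine ⟨BlowUp q, hq.isOptimalOrder_blowUp, ?_⟩
    rintro ⟨y, b⟩ hne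
    rcases eq_or_ne y x with rfl | hyx
    · exact (blowUp_mk_same b a).2 ((ha b).lt_of_ne fun h => hne (by rw [h]))
    · exact (blowUp_mk_of_ne hyx b a).2 (hlast y hyx)

end BlowUp

/-! ### The modules of `T_φ` -/

section Tournament

variable {n m s₁ s₂ : ℕ} {occ : Fin n → Fin m → Option Bool}

/-- The module of rank `k` in group `i`. -/
def varModule (i : Fin n) : Fin 6 → ModName n m :=
  ![.A i, .B i, .C i, .D i, .E i, .F i]

@[simp] lemma grp?_varModule (i : Fin n) (k : Fin 6) :
    grp? (varModule i k : ModName n m) = some i := by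
  fin_cases k <;> rfl

@[simp] lemma clause?_varModule (i : Fin n) (k : Fin 6) :
    clause? (varModule i k : ModName n m) = none := by
  fin_cases k <;> rfl

@[simp] lemma rk_varModule (i : Fin n) (k : Fin 6) : rk (varModule i k : ModName n m) = k := by
  fin_cases k <;> rfl

@[simp] lemma grp?_T (j : Fin m) : grp? (.T j : ModName n m) = none := rfl

@[simp] lemma clause?_T (j : Fin m) : clause? (.T j : ModName n m) = some j := rfl

lemma varModule_inj {i i' : Fin n} {k k' : Fin 6} :
    (varModule i k : ModName n m) = varModule i' k' ↔ i = i' ∧ k = k' := by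
  refine ⟨fun h => ⟨?_, ?_⟩, by rintro ⟨rfl, rfl⟩; rfl⟩
  · simpa using congrArg grp? h
  · simpa [Fin.ext_iff] using congrArg rk h

lemma varModule_ne_T (i : Fin n) (k : Fin 6) (j : Fin m) : varModule i k ≠ .T j := fun h => by
  simpa using congrArg clause? h

@[elab_as_elim]
lemma ModName.casesVarModule {P : ModName n m → Prop} (var : ∀ i k, P (varModule i k))
    (T : ∀ j, P (.T j)) (M : ModName n m) : P M := by
  cases M with
  | A i => exact var i 0
  | B i => exact var i 1
  | C i => exact var i 2
  | D i => exact var i 3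
  | E i => exact var i 4
  | F i => exact var i 5
  | T j => exact T j

/-- The decomposition of the set of modules into variable modules, indexed by group and rank, and
clause modules. -/
noncomputable def moduleEquiv : (Fin n × Fin 6) ⊕ Fin m ≃ ModName n m :=
  Equiv.ofBijective (Sum.elim (fun p => varModule p.1 p.2) .T) <| by
    refine ⟨?_, fun M => M.casesVarModule (fun i k => ⟨.inl (i, k), rfl⟩) fun j => ⟨.inr j, rfl⟩⟩
    refine Function.Injective.sumElim (fun p p' h => ?_) (fun j j' h => ?_)
      fun p j => varModule_ne_T p.1 p.2 j
    · exact Prod.ext_iff.2 (varModule_inj.1 h)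
    · exact ModName.T.inj h

lemma sum_modName {M : Type*} [AddCommMonoid M] (f : ModName n m → M) :
    ∑ x, f x = ∑ i, ∑ k, f (varModule i k) + ∑ j, f (.T j) := by
  rw [← moduleEquiv.sum_comp, Fintype.sum_sum_type, Fintype.sum_prod_type]
  rfl

/-- The direction of the arcs between the modules of ranks `k` and `k'` of one group. -/
def RankArc (k k' : ℕ) : Prop := (k < k' ∧ ¬(k = 3 ∧ k' = 5)) ∨ (k = 5 ∧ k' = 3)

instance : DecidableRel RankArc := fun _ _ => inferInstanceAs (Decidable (_ ∨ _))

instance : DecidableRel tBeats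
  | none, _ | some true, _ | some false, _ => inferInstanceAs (Decidable (_ ∨ _))

lemma modArc_varModule {i i' : Fin n} {k k' : Fin 6} :
    modArc occ (varModule i k) (varModule i' k') ↔ i < i' ∨ (i = i' ∧ RankArc k k') := by
  simp [modArc, RankArc]

lemma modArc_T_varModule {i : Fin n} {j : Fin m} {k : Fin 6} :
    modArc occ (.T j) (varModule i k) ↔ tBeats (occ i j) k := by
  simp [modArc]

lemma modArc_varModule_T {i : Fin n} {j : Fin m} {k : Fin 6} :
    modArc occ (varModule i k) (.T j) ↔ ¬tBeats (occ i j) k := by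
  simp [modArc]

instance : Std.Irrefl (modArc occ) where
  irrefl M := M.casesVarModule
    (fun i k => by
      have hk : ¬RankArc k k := by unfold RankArc; lia
      simp [modArc_varModule, hk])
    (fun j => by simp [modArc])

lemma arc_eq_blowUp : arc (s₁ := s₁) (s₂ := s₂) occ = BlowUp (modArc occ) := by
  ext ⟨M, a⟩ ⟨M', a'⟩
  rcases eq_or_ne M M' with rfl | hM
  · simp [arc, blowUp_mk_same]
  · simp [arc, blowUp_mk_of_ne hM, hM]

/-- The number of vertices of `E_i` in excess of `s₁`. -/
def surplus (i : Fin n) : ℕ := if (i : ℕ) = n - 1 then 3 else 2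

lemma msize_varModule (i : Fin n) (k : Fin 6) :
    msize n m s₁ s₂ (varModule i k) = s₁ + if k = 4 then surplus i else 0 := by
  fin_cases k <;> simp [varModule, msize, surplus]
  split_ifs <;> rfl

/-! ### Arrangements of the groups -/

/-- The position `0, …, 5` of the module of rank `k` in a group `A ≺ B ≺ C ≺ X ≺ Y ≺ Z`, where `XYZ`
is the cyclic order encoded by `c`: `DEF` for `some true`, `EFD` for `some false`, `FDE` for
`none`. -/
def pos : Option Bool → Fin 6 → ℕ
  | some true => ![0, 1, 2, 3, 4, 5]
  | some false => ![0, 1, 2, 5, 3, 4]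
  | none => ![0, 1, 2, 4, 5, 3]

/-- The ranks of the tail and the head of the only back arcs inside a group ordered by `pos c`. -/
def backPair : Option Bool → Fin 6 × Fin 6
  | some true => (5, 3)
  | some false => (3, 4)
  | none => (4, 5)

lemma pos_injective (c : Option Bool) : Function.Injective (pos c) := by decide +revert

lemma exists_pos_eq_five (c : Option Bool) : ∃ k, pos c k = 5 := by decide +revert

lemma pos_le_five (c : Option Bool) (k : Fin 6) : pos c k ≤ 5 := by decide +revert

lemma pos_three_lt_pos_five_iff {c : Option Bool} : pos c 3 < pos c 5 ↔ c = some true := by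
  decide +revert

lemma pos_lt_pos_five {c : Option Bool} {k : Fin 6} (h : pos c 3 < pos c 5) (hk : k ≠ 5) :
    pos c k < pos c 5 := by
  decide +revert

lemma rankArc_or_rankArc {k k' : Fin 6} (h : k ≠ k') : RankArc k k' ∨ RankArc k' k := by
  decide +revert

lemma rankArc_and_pos_lt_pos_iff {c : Option Bool} {k k' : Fin 6} :
    RankArc k k' ∧ pos c k' < pos c k ↔ (k, k') = backPair c := by
  decide +revert

lemma rankArc_backPair (c : Option Bool) : RankArc (backPair c).1 (backPair c).2 :=
  (rankArc_and_pos_lt_pos_iff.2 rfl).1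

lemma backPair_fst_ne_snd (c : Option Bool) : (backPair c).1 ≠ (backPair c).2 := by
  decide +revert

/-- The order `q` of the modules lists the groups consecutively, group `i` according to `pos (c i)`,
and has exactly the first `p i j` modules of group `i` before the clause module `T j`. -/
structure Arranges (q : ModName n m → ModName n m → Prop) (c : Fin n → Option Bool)
    (p : Fin n → Fin m → Fin 7) : Prop where
  rel_varModule {i i' : Fin n} {k k' : Fin 6} :
    q (varModule i k) (varModule i' k') ↔ i < i' ∨ (i = i' ∧ pos (c i) k < pos (c i) k')
  rel_T {i : Fin n} {j : Fin m} {k : Fin 6} : q (varModule i k) (.T j) ↔ pos (c i) k < p i j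

/-- The ranks of the modules in a group ordered by `pos c` whose arcs to or from a clause module
placed after the first `p` modules of the group are back arcs; `o` is the occurrence of the
variable in the clause. -/
def badRanks (o c : Option Bool) (p : Fin 7) : Finset (Fin 6) := {k | tBeats o k ↔ pos c k < p}

/-- The literal of a variable occurring as `o` in a clause agrees with the order `pos c` of its
group, and the clause module sits just before the last module of the group. -/
abbrev IsSettled (o c : Option Bool) (p : Fin 7) : Prop := o = c ∧ c ≠ none ∧ p = 5

lemma three_le_card_badRanks_add (o c : Option Bool) (p : Fin 7) :
    3 ≤ (badRanks o c p).card + if IsSettled o c p then 1 else 0 := by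
  decide +revert

lemma card_badRanks_of_isSettled {o c : Option Bool} {p : Fin 7} (h : IsSettled o c p) :
    (badRanks o c p).card = 2 := by
  decide +revert

lemma four_notMem_badRanks_of_isSettled {o c : Option Bool} {p : Fin 7} (h : IsSettled o c p) :
    4 ∉ badRanks o c p := by
  decide +revert

lemma card_badRanks_of_extreme {o c : Option Bool} {p : Fin 7} (h : p = 0 ∨ p = 6) :
    (badRanks o c p).card = 3 := by
  decide +revert

/-- The back arcs inside the groups ordered by `pos (c i)` number `n * s₁ ^ 2 + penalty c * s₁`. -/
def penalty (c : Fin n → Option Bool) : ℕ := ∑ i, if c i = some true then 0 else surplus i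

/-- The number of back arcs between variable modules and clause modules. -/
def mixedWeight (s₁ s₂ : ℕ) (occ : Fin n → Fin m → Option Bool) (c : Fin n → Option Bool)
    (p : Fin n → Fin m → Fin 7) : ℕ :=
  ∑ j, ∑ i, ∑ k ∈ badRanks (occ i j) (c i) (p i j),
    msize n m s₁ s₂ (varModule i k) * s₂

/-- The number of back arcs between clause modules. -/
noncomputable def clauseWeight (s₁ s₂ : ℕ) (occ : Fin n → Fin m → Option Bool)
    (q : ModName n m → ModName n m → Prop) : ℕ :=
  ∑ j, ∑ j', backWeight (msize n m s₁ s₂) (modArc occ) q (.T j) (.T j')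

lemma fasWeight_modArc (w : ModName n m → ℕ) (q : ModName n m → ModName n m → Prop) :
    fasWeight w (modArc occ) q =
      ∑ i, ∑ k, ∑ i', ∑ k', backWeight w (modArc occ) q (varModule i k) (varModule i' k') +
      ∑ j, ∑ i, ∑ k, (backWeight w (modArc occ) q (varModule i k) (.T j) +
        backWeight w (modArc occ) q (.T j) (varModule i k)) +
      ∑ j, ∑ j', backWeight w (modArc occ) q (.T j) (.T j') := by
  simp only [fasWeight, sum_modName, Finset.sum_add_distrib]
  have hcomm : ∑ i, ∑ k, ∑ j, backWeight w (modArc occ) q (varModule i k) (.T j) =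
      ∑ j, ∑ i, ∑ k, backWeight w (modArc occ) q (varModule i k) (.T j) :=
    (Finset.sum_congr rfl fun i _ => Finset.sum_comm).trans Finset.sum_comm
  rw [hcomm]
  ring

namespace Arranges

variable {q : ModName n m → ModName n m → Prop} {c : Fin n → Option Bool}
  {p : Fin n → Fin m → Fin 7}

lemma backWeight_varModule (h : Arranges q c p) (w : ModName n m → ℕ) (i i' : Fin n)
    (k k' : Fin 6) :
    backWeight w (modArc occ) q (varModule i k) (varModule i' k') =
      if i = i' ∧ (k, k') = backPair (c i) then w (varModule i k) * w (varModule i' k') else 0 := by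
  have hback : modArc occ (varModule i k) (varModule i' k') ∧ q (varModule i' k') (varModule i k) ↔
      i = i' ∧ (k, k') = backPair (c i) := by
    rw [modArc_varModule, h.rel_varModule]
    rcases eq_or_ne i i' with rfl | hi
    · simp [← rankArc_and_pos_lt_pos_iff]
    · simpa [hi, hi.symm] using le_of_lt
  simp only [backWeight, hback]

lemma sum_backWeight_varModule (h : Arranges q c p) :
    ∑ i, ∑ k, ∑ i', ∑ k', backWeight (msize n m s₁ s₂) (modArc occ) q (varModule i k)
      (varModule i' k') = n * s₁ ^ 2 + penalty c * s₁ := by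
  have hgroup (i : Fin n) : ∑ k, ∑ i', ∑ k', backWeight (msize n m s₁ s₂) (modArc occ) q
      (varModule i k) (varModule i' k') =
        s₁ ^ 2 + (if c i = some true then 0 else surplus i) * s₁ := by
    rw [Finset.sum_comm, Fintype.sum_eq_single i]
    · rw [← Fintype.sum_prod_type', Fintype.sum_eq_single (backPair (c i))]
      · rw [h.backWeight_varModule, if_pos ⟨rfl, rfl⟩, msize_varModule, msize_varModule]
        rcases c i with _ | _ | _ <;> simp [backPair] <;> ring
      · rintro ⟨k, k'⟩ hk
        simp [h.backWeight_varModule, hk]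
    · intro i' hi'
      simp [h.backWeight_varModule, hi'.symm]
  simp [hgroup, Finset.sum_add_distrib, penalty, Finset.sum_mul]

variable [IsStrictTotalOrder _ q]

lemma backWeight_add_backWeight (h : Arranges q c p) (w : ModName n m → ℕ) (i : Fin n) (j : Fin m)
    (k : Fin 6) :
    backWeight w (modArc occ) q (varModule i k) (.T j) +
      backWeight w (modArc occ) q (.T j) (varModule i k) =
      if k ∈ badRanks (occ i j) (c i) (p i j) then w (varModule i k) * w (.T j) else 0 := by
  have hflip : q (.T j) (varModule i k) ↔ ¬q (varModule i k) (.T j) :=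
    ⟨asymm_of q, fun hq => ((trichotomous_of q _ _).resolve_left hq).resolve_left
      (varModule_ne_T i k j)⟩
  simp only [backWeight, badRanks, modArc_varModule_T, modArc_T_varModule, hflip, h.rel_T,
    Finset.mem_filter_univ]
  by_cases ht : tBeats (occ i j) k <;> by_cases hp : pos (c i) k < p i j <;>
    simp [ht, hp, mul_comm]

theorem fasWeight_eq (h : Arranges q c p) :
    fasWeight (msize n m s₁ s₂) (modArc occ) q =
      n * s₁ ^ 2 + penalty c * s₁ + mixedWeight s₁ s₂ occ c p + clauseWeight s₁ s₂ occ q := by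
  simp only [fasWeight_modArc, h.sum_backWeight_varModule, h.backWeight_add_backWeight,
    mixedWeight, clauseWeight, Finset.sum_ite_mem, Finset.univ_inter]
  rfl

end Arranges

lemma clauseWeight_le (q : ModName n m → ModName n m → Prop) :
    clauseWeight s₁ s₂ occ q ≤ m ^ 2 * s₂ ^ 2 := by
  have hback (j j' : Fin m) :
      backWeight (msize n m s₁ s₂) (modArc occ) q (.T j) (.T j') ≤ s₂ * s₂ := by
    unfold backWeight
    split_ifs
    exacts [le_rfl, Nat.zero_le _]
  calc clauseWeight s₁ s₂ occ q ≤ ∑ _j : Fin m, ∑ _j' : Fin m, s₂ * s₂ :=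
        Finset.sum_le_sum fun j _ => Finset.sum_le_sum fun j' _ => hback j j'
    _ = m ^ 2 * s₂ ^ 2 := by simp; ring

open Classical in
/-- The back arcs between variable modules, a module being given by its group and rank. -/
noncomputable def varBackArcs (occ : Fin n → Fin m → Option Bool)
    (q : ModName n m → ModName n m → Prop) : Finset ((Fin n × Fin 6) × (Fin n × Fin 6)) :=
  {e | modArc occ (varModule e.1.1 e.1.2) (varModule e.2.1 e.2.2) ∧
    q (varModule e.2.1 e.2.2) (varModule e.1.1 e.1.2)}

lemma mem_varBackArcs {q : ModName n m → ModName n m → Prop} {i i' : Fin n} {k k' : Fin 6} :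
    ((i, k), (i', k')) ∈ varBackArcs occ q ↔
      (i < i' ∨ (i = i' ∧ RankArc k k')) ∧ q (varModule i' k') (varModule i k) := by
  simp only [varBackArcs, Finset.mem_filter_univ, modArc_varModule]

/-- The back arc inside group `i` when the groups are ordered by `pos (c i)`. -/
def groupBackArc (c : Fin n → Option Bool) (i : Fin n) : (Fin n × Fin 6) × (Fin n × Fin 6) :=
  ((i, (backPair (c i)).1), (i, (backPair (c i)).2))

lemma groupBackArc_injective (c : Fin n → Option Bool) : Function.Injective (groupBackArc c) :=
  fun _ _ h => congrArg (fun e => e.1.1) h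

lemma card_varBackArcs_mul_sq_le (q : ModName n m → ModName n m → Prop) :
    (varBackArcs occ q).card * s₁ ^ 2 ≤ fasWeight (msize n m s₁ s₂) (modArc occ) q := by
  simp only [varBackArcs, Finset.card_filter, Finset.sum_mul, Fintype.sum_prod_type,
    fasWeight_modArc, ite_mul, one_mul, zero_mul, backWeight]
  refine le_add_right (le_add_right ?_)
  refine Finset.sum_le_sum fun i _ => Finset.sum_le_sum fun k _ => ?_
  refine Finset.sum_le_sum fun i' _ => Finset.sum_le_sum fun k' _ => ?_
  split_ifs
  · rw [sq, msize_varModule, msize_varModule]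
    exact Nat.mul_le_mul (Nat.le_add_right _ _) (Nat.le_add_right _ _)
  · exact le_rfl

section ExistsArranges

variable {q : ModName n m → ModName n m → Prop} [IsStrictTotalOrder _ q]

variable (q) in
-- The arcs `D → E → F → D` form a cycle, so at least one of them is a back arc.
lemma exists_rel_backPair (i : Fin n) :
    ∃ c, q (varModule i (backPair c).2) (varModule i (backPair c).1) := by
  by_contra! hforward
  have hrel (c : Option Bool) : q (varModule i (backPair c).1) (varModule i (backPair c).2) := by
    refine (trichotomous_of q _ _).resolve_right (not_or.2 ⟨fun h => ?_, hforward c⟩)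
    exact backPair_fst_ne_snd c (varModule_inj.1 h).2
  exact irrefl_of q _ (trans_of q (trans_of q (hrel (some false)) (hrel none)) (hrel (some true)))

lemma exists_varBackArcs_eq
    (hlt : fasWeight (msize n m s₁ s₂) (modArc occ) q < (n + 1) * s₁ ^ 2) :
    ∃ c, varBackArcs occ q = Finset.univ.image (groupBackArc c) := by
  choose c hc using exists_rel_backPair q
  have hcard : (varBackArcs occ q).card ≤ n :=
    Nat.le_of_lt_succ (Nat.lt_of_mul_lt_mul_right ((card_varBackArcs_mul_sq_le q).trans_lt hlt))
  refine ⟨c, (Finset.eq_of_subset_of_card_le ?_ ?_).symm⟩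
  · rw [Finset.image_subset_iff]
    exact fun i _ => mem_varBackArcs.2 ⟨.inr ⟨rfl, rankArc_backPair (c i)⟩, hc i⟩
  · rwa [Finset.card_image_of_injective _ (groupBackArc_injective c), Finset.card_fin]

lemma rel_varModule_of_varBackArcs_eq {c : Fin n → Option Bool}
    (hc : varBackArcs occ q = Finset.univ.image (groupBackArc c)) {i i' : Fin n} {k k' : Fin 6}
    (h : i < i' ∨ (i = i' ∧ pos (c i) k < pos (c i) k')) :
    q (varModule i k) (varModule i' k') := by
  have hback {i i' : Fin n} {k k' : Fin 6} :
      ((i, k), (i', k')) ∈ varBackArcs occ q ↔ i = i' ∧ (k, k') = backPair (c i) := by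
    simp only [hc, Finset.mem_image, Finset.mem_univ, true_and, groupBackArc, Prod.ext_iff]
    grind
  have hforward {i i' : Fin n} {k k' : Fin 6} (harc : i < i' ∨ (i = i' ∧ RankArc k k'))
      (hne : (i, k) ≠ (i', k')) (hnot : ¬(i = i' ∧ (k, k') = backPair (c i))) :
      q (varModule i k) (varModule i' k') := by
    refine (trichotomous_of q _ _).resolve_right (not_or.2 ⟨fun h => ?_, fun h => ?_⟩)
    · exact hne (Prod.ext_iff.2 (varModule_inj.1 h))
    · exact hnot (hback.1 (mem_varBackArcs.2 ⟨harc, h⟩))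
  rcases h with hi | ⟨rfl, hpos⟩
  · exact hforward (.inl hi) (fun h => hi.ne (congrArg Prod.fst h)) fun h => hi.ne h.1
  · have hk : k ≠ k' := by rintro rfl; exact hpos.false
    rcases rankArc_or_rankArc hk with harc | harc
    · refine hforward (.inr ⟨rfl, harc⟩) (by simpa using hk) fun h => ?_
      exact hpos.asymm (rankArc_and_pos_lt_pos_iff.2 h.2).2
    · exact (mem_varBackArcs.1 (hback.2 ⟨rfl, rankArc_and_pos_lt_pos_iff.1 ⟨harc, hpos⟩⟩)).2

lemma rel_varModule_iff_of_varBackArcs_eq {c : Fin n → Option Bool}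
    (hc : varBackArcs occ q = Finset.univ.image (groupBackArc c)) {i i' : Fin n} {k k' : Fin 6} :
    q (varModule i k) (varModule i' k') ↔ i < i' ∨ (i = i' ∧ pos (c i) k < pos (c i) k') := by
  refine ⟨fun hq => ?_, rel_varModule_of_varBackArcs_eq hc⟩
  rcases lt_trichotomy i i' with hi | rfl | hi
  · exact .inl hi
  · rcases lt_trichotomy (pos (c i) k) (pos (c i) k') with hk | hk | hk
    · exact .inr ⟨rfl, hk⟩
    · rw [pos_injective _ hk] at hq
      exact absurd hq (irrefl_of q _)
    · exact absurd hq (asymm_of q (rel_varModule_of_varBackArcs_eq hc (.inr ⟨rfl, hk⟩)))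
  · exact absurd hq (asymm_of q (rel_varModule_of_varBackArcs_eq hc (.inl hi)))

lemma exists_rel_T_iff {c : Fin n → Option Bool}
    (hq : ∀ {i i' k k'}, q (varModule i k) (varModule i' k') ↔
      i < i' ∨ (i = i' ∧ pos (c i) k < pos (c i) k')) (i : Fin n) (j : Fin m) :
    ∃ p : Fin 7, ∀ k, q (varModule i k) (.T j) ↔ pos (c i) k < p := by
  classical
  let rankEnd (k : Fin 6) : ℕ := if q (varModule i k) (.T j) then pos (c i) k + 1 else 0
  have hle : Finset.univ.sup rankEnd ≤ 6 := Finset.sup_le fun k _ => by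
    have := pos_le_five (c i) k
    unfold rankEnd
    split_ifs <;> lia
  refine ⟨⟨Finset.univ.sup rankEnd, Nat.lt_succ_of_le hle⟩, fun k => ?_⟩
  rw [Finset.lt_sup_iff]
  constructor
  · exact fun h => ⟨k, Finset.mem_univ k, by simp [rankEnd, h]⟩
  · rintro ⟨l, -, hl⟩
    unfold rankEnd at hl
    split_ifs at hl with hlj
    · rcases (Nat.le_of_lt_succ hl).eq_or_lt with hkl | hkl
      · rwa [pos_injective _ hkl]
      · exact trans_of q (hq.2 (.inr ⟨rfl, hkl⟩)) hlj
    · exact absurd hl (Nat.not_lt_zero _)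

theorem exists_arranges (hlt : fasWeight (msize n m s₁ s₂) (modArc occ) q < (n + 1) * s₁ ^ 2) :
    ∃ c p, Arranges q c p := by
  obtain ⟨c, hc⟩ := exists_varBackArcs_eq hlt
  choose p hp using exists_rel_T_iff (rel_varModule_iff_of_varBackArcs_eq hc)
  exact ⟨c, p, rel_varModule_iff_of_varBackArcs_eq hc, hp _ _ _⟩

end ExistsArranges

/-! ### Clause modules -/

lemma sum_card_badRanks_mul_le_mixedWeight (occ : Fin n → Fin m → Option Bool)
    (c : Fin n → Option Bool) (p : Fin n → Fin m → Fin 7) :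
    (∑ j, ∑ i, (badRanks (occ i j) (c i) (p i j)).card) * (s₁ * s₂) ≤
      mixedWeight s₁ s₂ occ c p := by
  simp only [mixedWeight, Finset.sum_mul]
  refine Finset.sum_le_sum fun j _ => Finset.sum_le_sum fun i _ => ?_
  refine Finset.card_nsmul_le_sum _ _ _ fun k _ => ?_
  rw [msize_varModule]
  exact Nat.mul_le_mul_right _ (Nat.le_add_right _ _)

namespace Arranges

variable {q : ModName n m → ModName n m → Prop} [IsStrictTotalOrder _ q] {c : Fin n → Option Bool}
  {p : Fin n → Fin m → Fin 7}

lemma exists_rel_varModule_of_eq_five (h : Arranges q c p) {i : Fin n} {j : Fin m}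
    (hp : p i j = 5) : ∃ k, q (.T j) (varModule i k) := by
  obtain ⟨k, hk⟩ := exists_pos_eq_five (c i)
  have hnot : ¬q (varModule i k) (.T j) := by simp [h.rel_T, hp, hk]
  exact ⟨k, ((trichotomous_of q _ _).resolve_left hnot).resolve_left (varModule_ne_T i k j)⟩

lemma not_lt_of_eq_five (h : Arranges q c p) {i i' : Fin n} {j : Fin m} (hp : p i j = 5)
    (hp' : p i' j = 5) : ¬i < i' := fun hlt => by
  obtain ⟨k, hk⟩ := h.exists_rel_varModule_of_eq_five hp
  obtain ⟨l, hl⟩ : ∃ l, pos (c i') l < 5 := ⟨0, by generalize c i' = d; decide +revert⟩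
  have hl' : q (varModule i' l) (.T j) := h.rel_T.2 (by simpa [hp'] using hl)
  exact irrefl_of q _ (trans_of q (trans_of q hk (h.rel_varModule.2 (.inl hlt))) hl')

lemma three_mul_le (h : Arranges q c p) (occ : Fin n → Fin m → Option Bool) (j : Fin m) :
    3 * n ≤ ∑ i, (badRanks (occ i j) (c i) (p i j)).card +
      if ∃ i, IsSettled (occ i j) (c i) (p i j) then 1 else 0 := by
  have hsum : 3 * n ≤ ∑ i, (badRanks (occ i j) (c i) (p i j)).card +
      ({i | IsSettled (occ i j) (c i) (p i j)} : Finset (Fin n)).card := by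
    rw [Finset.card_filter, ← Finset.sum_add_distrib, mul_comm]
    simpa using Finset.card_nsmul_le_sum Finset.univ _ 3
      fun i _ => three_le_card_badRanks_add (occ i j) (c i) (p i j)
  refine hsum.trans (Nat.add_le_add_left ?_ _)
  split_ifs with hsettled
  · refine Finset.card_le_one.2 fun i hi i' hi' => ?_
    rw [Finset.mem_filter_univ] at hi hi'
    exact le_antisymm (not_lt.1 (h.not_lt_of_eq_five hi'.2.2 hi.2.2))
      (not_lt.1 (h.not_lt_of_eq_five hi.2.2 hi'.2.2))
  · simpa using hsettled

lemma three_mul_mul_le (h : Arranges q c p) (occ : Fin n → Fin m → Option Bool) :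
    3 * n * m ≤ ∑ j, ∑ i, (badRanks (occ i j) (c i) (p i j)).card +
      ({j | ∃ i, IsSettled (occ i j) (c i) (p i j)} : Finset (Fin m)).card := by
  rw [Finset.card_filter, ← Finset.sum_add_distrib, mul_comm]
  simpa using Finset.card_nsmul_le_sum Finset.univ _ (3 * n) fun j _ => h.three_mul_le occ j

lemma le_mixedWeight_add (h : Arranges q c p) :
    3 * n * m * (s₁ * s₂) ≤ mixedWeight s₁ s₂ occ c p + m * (s₁ * s₂) := by
  refine le_trans ?_ (Nat.add_le_add_right (sum_card_badRanks_mul_le_mixedWeight occ c p) _)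
  rw [← add_mul]
  refine Nat.mul_le_mul_right _ ((h.three_mul_mul_le occ).trans (Nat.add_le_add_left ?_ _))
  simpa using Finset.card_le_univ ({j | ∃ i, IsSettled (occ i j) (c i) (p i j)} : Finset (Fin m))

lemma exists_isSettled (h : Arranges q c p)
    (hlt : mixedWeight s₁ s₂ occ c p + m * (s₁ * s₂) < (3 * n * m + 1) * (s₁ * s₂)) (j : Fin m) :
    ∃ i, IsSettled (occ i j) (c i) (p i j) := by
  by_contra hj
  refine hlt.not_ge (le_trans ?_
    (Nat.add_le_add_right (sum_card_badRanks_mul_le_mixedWeight occ c p) _))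
  rw [← add_mul]
  have hcard := Finset.card_lt_univ_of_notMem (s := {j | ∃ i, IsSettled (occ i j) (c i) (p i j)})
    (mt (Finset.mem_filter_univ j).1 hj)
  rw [Fintype.card_fin] at hcard
  have := h.three_mul_mul_le occ
  exact Nat.mul_le_mul_right _ (by lia)

end Arranges

/-- The position among the modules of group `i` of a clause module placed just before the last
module of group `i₀`. -/
def cut (i₀ i : Fin n) : Fin 7 := if i < i₀ then 6 else if i = i₀ then 5 else 0

lemma lt_cut_iff {i₀ i : Fin n} {a : ℕ} (ha : a ≤ 5) :
    a < cut i₀ i ↔ i < i₀ ∨ (i = i₀ ∧ a < 5) := by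
  rcases lt_trichotomy i i₀ with hi | rfl | hi
  · simpa [cut, hi] using Nat.lt_succ_of_le ha
  · simp [cut]
  · simp [cut, hi.ne', hi.not_gt]

/-- A key for sorting the modules by group and then by `pos (c i)`, where the clause module `T j`
comes just before the last module of group `s j`. -/
def moduleKey (c : Fin n → Option Bool) (s : Fin m → Fin n) : (Fin n × Fin 6) ⊕ Fin m → ℕ ×ₗ ℕ :=
  Sum.elim (fun v => toLex (6 * (v.1 : ℕ) + pos (c v.1) v.2, 0))
    (fun j => toLex (6 * (s j : ℕ) + 4, (j : ℕ) + 1))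

lemma moduleKey_injective (c : Fin n → Option Bool) (s : Fin m → Fin n) :
    Function.Injective (moduleKey c s) := by
  refine Function.Injective.sumElim ?_ ?_ ?_
  · rintro ⟨i, k⟩ ⟨i', k'⟩ h
    have hpos : 6 * (i : ℕ) + pos (c i) k = 6 * (i' : ℕ) + pos (c i') k' := congrArg Prod.fst h
    have hk := pos_le_five (c i) k
    have hk' := pos_le_five (c i') k'
    obtain rfl : i = i' := by lia
    rw [pos_injective _ (Nat.add_left_cancel hpos)]
  · intro j j' h
    have hj : (j : ℕ) + 1 = (j' : ℕ) + 1 := congrArg Prod.snd h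
    exact Fin.ext (Nat.succ_injective hj)
  · intro v j h
    exact Nat.succ_ne_zero j (congrArg Prod.snd h).symm

lemma exists_arranges_cut (c : Fin n → Option Bool) (s : Fin m → Fin n) :
    ∃ q : ModName n m → ModName n m → Prop,
      IsStrictTotalOrder _ q ∧ Arranges q c fun i j => cut (s j) i := by
  have hvar (i : Fin n) (k : Fin 6) :
      moduleEquiv.symm (varModule i k : ModName n m) = .inl (i, k) :=
    moduleEquiv.symm_apply_eq.2 rfl
  have hT (j : Fin m) : moduleEquiv.symm (.T j : ModName n m) = .inr j :=
    moduleEquiv.symm_apply_eq.2 rfl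
  let key := moduleEquiv.symm.toEmbedding.trans ⟨moduleKey c s, moduleKey_injective c s⟩
  refine ⟨key ⁻¹'o (· < ·), (RelEmbedding.preimage key _).isStrictTotalOrder, ?_, ?_⟩
  · intro i i' k k'
    have hk := pos_le_five (c i) k
    have hk' := pos_le_five (c i') k'
    simp only [Order.Preimage, key, Function.Embedding.trans_apply, hvar,
      Function.Embedding.coeFn_mk, moduleKey, Sum.elim_inl, Prod.Lex.toLex_lt_toLex]
    rcases eq_or_ne i i' with rfl | hi
    · simp
    · have := Fin.val_ne_of_ne hi
      simp only [hi, false_and, or_false, Fin.lt_def]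
      lia
  · intro i j k
    have hk := pos_le_five (c i) k
    simp only [Order.Preimage, key, Function.Embedding.trans_apply, hvar, hT,
      Function.Embedding.coeFn_mk, moduleKey, Sum.elim_inl, Sum.elim_inr,
      Prod.Lex.toLex_lt_toLex, lt_cut_iff hk, Fin.lt_def, Fin.ext_iff]
    lia

lemma sum_msize_badRanks (o c : Option Bool) (p : Fin 7) (i : Fin n) :
    ∑ k ∈ badRanks o c p, msize n m s₁ s₂ (varModule i k) =
      (badRanks o c p).card * s₁ + if 4 ∈ badRanks o c p then surplus i else 0 := by
  simp [msize_varModule, Finset.sum_add_distrib]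

lemma surplus_le_three (i : Fin n) : surplus i ≤ 3 := by
  unfold surplus
  split_ifs <;> lia

lemma sum_msize_badRanks_cut_add_le {o c : Option Bool} {i₀ i : Fin n}
    (h : i = i₀ → o = c ∧ c ≠ none) :
    ∑ k ∈ badRanks o c (cut i₀ i), msize n m s₁ s₂ (varModule i k) +
      (if i = i₀ then s₁ + 9 else 0) ≤ 3 * s₁ + 9 := by
  rw [sum_msize_badRanks]
  by_cases hi : i = i₀
  · have hsettled : IsSettled o c (cut i₀ i) := ⟨(h hi).1, (h hi).2, by simp [cut, hi]⟩
    rw [card_badRanks_of_isSettled hsettled, if_neg (four_notMem_badRanks_of_isSettled hsettled),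
      if_pos hi]
    lia
  · have hextreme : cut i₀ i = 0 ∨ cut i₀ i = 6 := by
      unfold cut
      split_ifs <;> simp
    rw [card_badRanks_of_extreme hextreme, if_neg hi]
    have := surplus_le_three i
    split_ifs <;> lia

lemma mixedWeight_cut_add_le {c : Fin n → Option Bool} {s : Fin m → Fin n}
    (hs : ∀ j, occ (s j) j = c (s j) ∧ c (s j) ≠ none) :
    mixedWeight s₁ s₂ occ c (fun i j => cut (s j) i) + m * (s₁ * s₂) + 9 * m * s₂ ≤
      3 * n * m * (s₁ * s₂) + 9 * m * n * s₂ := by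
  have hclause (j : Fin m) :
      ∑ i, ∑ k ∈ badRanks (occ i j) (c i) (cut (s j) i), msize n m s₁ s₂ (varModule i k) +
        (s₁ + 9) ≤ n * (3 * s₁ + 9) := by
    have := Finset.sum_le_card_nsmul Finset.univ _ (3 * s₁ + 9) fun i _ =>
      sum_msize_badRanks_cut_add_le (m := m) (s₁ := s₁) (s₂ := s₂) (o := occ i j) (c := c i)
        (i₀ := s j) (i := i) (by rintro rfl; exact hs j)
    simpa [Finset.sum_add_distrib] using this
  have hsum := Finset.sum_le_card_nsmul Finset.univ _ _ fun j _ => hclause j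
  rw [Finset.sum_add_distrib] at hsum
  simp only [Finset.sum_const, Finset.card_univ, Fintype.card_fin, smul_eq_mul] at hsum
  simp only [mixedWeight, ← Finset.sum_mul]
  nlinarith [Nat.mul_le_mul_right s₂ hsum]

/-! ### Optimal orders and satisfying assignments -/

lemma satClause_iff {σ : Fin n → Bool} {j : Fin m} :
    SatClause occ σ j ↔ ∃ i, occ i j = some (σ i) :=
  exists_congr fun i => by cases σ i <;> simp

lemma sat_of_forall_exists_isSettled {c : Fin n → Option Bool} {p : Fin n → Fin m → Fin 7}
    (hsettled : ∀ j, ∃ i, IsSettled (occ i j) (c i) (p i j)) :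
    Sat occ fun i => decide (c i = some true) := fun j => by
  obtain ⟨i, hi, hne, -⟩ := hsettled j
  refine satClause_iff.2 ⟨i, ?_⟩
  rcases hc : c i with _ | _ | _ <;> simp_all

lemma penalty_le (c : Fin n → Option Bool) : penalty c ≤ 3 * n := by
  rw [mul_comm]
  simpa [penalty] using Finset.sum_le_card_nsmul Finset.univ _ 3 fun i _ =>
    (ite_le_sup _ _ _).trans (sup_le (Nat.zero_le _) (surplus_le_three i))

lemma penalty_add_wt (hn : n - 1 < n) (σ : Fin n → Bool) :
    penalty (some ∘ σ) + 2 * wt σ + (if σ ⟨n - 1, hn⟩ = true then 1 else 0) = 2 * n + 1 := by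
  have hsurplus (i : Fin n) : surplus i = 2 + if ⟨n - 1, hn⟩ = i then 1 else 0 := by
    simp only [surplus, Fin.ext_iff, eq_comm (a := n - 1)]
    split_ifs <;> rfl
  have hwt : (if σ ⟨n - 1, hn⟩ = true then 1 else 0) =
      ∑ i, if ⟨n - 1, hn⟩ = i then (if σ i = true then 1 else 0) else 0 := by simp
  have hconst : 2 * n + 1 = ∑ i : Fin n, surplus i := by
    simp [hsurplus, Finset.sum_add_distrib, mul_comm]
  rw [hwt, hconst, penalty, wt, Finset.card_filter, Finset.mul_sum, ← Finset.sum_add_distrib,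
    ← Finset.sum_add_distrib]
  refine Finset.sum_congr rfl fun i _ => ?_
  cases hi : σ i <;> simp [hi, hsurplus]

/-- The error term of the three inequalities on `s₁` and `s₂`: the feedback arc set built from a
satisfying assignment of penalty `P` has between `n * s₁ ^ 2 + P * s₁ + (3 * n - 1) * m * s₁ * s₂`
and that many plus `slack n m s₂` elements. -/
def slack (n m s₂ : ℕ) : ℕ := m ^ 2 * s₂ ^ 2 + 9 * m * (n - 1) * s₂

lemma exists_fasWeight_add_le (hn : 0 < n) {σ : Fin n → Bool} (hσ : Sat occ σ) :
    ∃ q : ModName n m → ModName n m → Prop, IsStrictTotalOrder _ q ∧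
      fasWeight (msize n m s₁ s₂) (modArc occ) q + m * (s₁ * s₂) ≤
        n * s₁ ^ 2 + penalty (some ∘ σ) * s₁ + 3 * n * m * (s₁ * s₂) + slack n m s₂ := by
  choose s hs using fun j => satClause_iff.1 (hσ j)
  obtain ⟨q, hq, harr⟩ := exists_arranges_cut (some ∘ σ) s
  refine ⟨q, hq, ?_⟩
  have hmixed := mixedWeight_cut_add_le (s₁ := s₁) (s₂ := s₂) (c := some ∘ σ) fun j =>
    ⟨hs j, Option.some_ne_none (σ (s j))⟩
  have hclause := clauseWeight_le (s₁ := s₁) (s₂ := s₂) (occ := occ) q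
  obtain ⟨l, rfl⟩ := Nat.exists_eq_add_one.2 hn
  have : 9 * m * (l + 1) * s₂ = 9 * m * l * s₂ + 9 * m * s₂ := by ring
  rw [harr.fasWeight_eq, slack, Nat.add_sub_cancel]
  lia

namespace Arranges

variable {q : ModName n m → ModName n m → Prop} [IsStrictTotalOrder _ q] {c : Fin n → Option Bool}
  {p : Fin n → Fin m → Fin 7}

lemma placesLast_F_iff (h : Arranges q c p) (hfive : ∀ j, ∃ i, p i j = 5) (hn : n - 1 < n) :
    PlacesLast q (.F ⟨n - 1, hn⟩) ↔ c ⟨n - 1, hn⟩ = some true := by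
  rw [← pos_three_lt_pos_five_iff]
  constructor
  · intro hlast
    have hDF : q (varModule ⟨n - 1, hn⟩ 3) (varModule ⟨n - 1, hn⟩ 5) := hlast _ nofun
    simpa [h.rel_varModule] using hDF
  · intro hDF
    have hvar (i : Fin n) (k : Fin 6) (hne : varModule (m := m) i k ≠ .F ⟨n - 1, hn⟩) :
        q (varModule i k) (varModule ⟨n - 1, hn⟩ 5) := by
      rw [h.rel_varModule]
      rcases (Fin.le_def.2 (Nat.le_sub_one_of_lt i.2) : i ≤ ⟨n - 1, hn⟩).lt_or_eq with hi | rfl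
      · exact .inl hi
      · exact .inr ⟨rfl, pos_lt_pos_five hDF fun hk => hne (hk ▸ rfl)⟩
    refine fun M => M.casesVarModule hvar fun j _ => ?_
    obtain ⟨i, hi⟩ := hfive j
    obtain ⟨k, hk⟩ := h.exists_rel_varModule_of_eq_five hi
    by_cases heq : varModule (m := m) i k = .F ⟨n - 1, hn⟩
    · exact heq ▸ hk
    · exact trans_of q hk (hvar i k heq)

end Arranges

namespace IsMinWeightOrder

variable {q : ModName n m → ModName n m → Prop}

/-- The first two inequalities force an optimal order into the shape of `Arranges` with a settled
variable for each clause, and the third makes its assignment minimize `penalty`. -/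
theorem exists_sat_penalty_le (hq : IsMinWeightOrder (msize n m s₁ s₂) (modArc occ) q) (hn : 0 < n)
    (hsat : ∃ σ, Sat occ σ)
    (hgroup : 3 * n * m * (s₁ * s₂) + 3 * n * s₁ + slack n m s₂ < s₁ ^ 2 + m * (s₁ * s₂))
    (hclause : 3 * n * s₁ + slack n m s₂ < s₁ * s₂) (hpenalty : slack n m s₂ < s₁) :
    ∃ τ, Sat occ τ ∧ (∀ σ, Sat occ σ → penalty (some ∘ τ) ≤ penalty (some ∘ σ)) ∧
      (PlacesLast q (.F ⟨n - 1, Nat.sub_lt hn one_pos⟩) ↔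
        τ ⟨n - 1, Nat.sub_lt hn one_pos⟩ = true) := by
  have := hq.1
  have hle {σ : Fin n → Bool} (hσ : Sat occ σ) :
      fasWeight (msize n m s₁ s₂) (modArc occ) q + m * (s₁ * s₂) ≤
        n * s₁ ^ 2 + penalty (some ∘ σ) * s₁ + 3 * n * m * (s₁ * s₂) + slack n m s₂ :=
    have ⟨q', hq', hle⟩ := exists_fasWeight_add_le hn hσ
    (Nat.add_le_add_right (hq.2 q' hq') _).trans hle
  obtain ⟨σ₀, hσ₀⟩ := hsat
  have hle₀ := hle hσ₀
  have hpen₀ := Nat.mul_le_mul_right s₁ (penalty_le (some ∘ σ₀))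
  obtain ⟨c, p, harr⟩ := exists_arranges (q := q) (s₁ := s₁) (s₂ := s₂) (occ := occ) (by lia)
  rw [harr.fasWeight_eq] at hle hle₀
  have hsettled := harr.exists_isSettled (s₁ := s₁) (s₂ := s₂) (occ := occ) (by lia)
  refine ⟨_, sat_of_forall_exists_isSettled hsettled, fun σ hσ => ?_, ?_⟩
  · have hmixed := harr.le_mixedWeight_add (s₁ := s₁) (s₂ := s₂) (occ := occ)
    have hlt : penalty c * s₁ < (penalty (some ∘ σ) + 1) * s₁ := by
      have := hle hσ
      lia
    simpa [penalty] using Nat.le_of_lt_succ (Nat.lt_of_mul_lt_mul_right hlt)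
  · rw [harr.placesLast_F_iff fun j => (hsettled j).imp fun i hi => hi.2.2]
    exact decide_eq_true_iff.symm

end IsMinWeightOrder

theorem exists_isMinWeightOrder_placesLast_iff (hn : 0 < n) (hsat : ∃ σ, Sat occ σ)
    (hgroup : 3 * n * m * (s₁ * s₂) + 3 * n * s₁ + slack n m s₂ < s₁ ^ 2 + m * (s₁ * s₂))
    (hclause : 3 * n * s₁ + slack n m s₂ < s₁ * s₂) (hpenalty : slack n m s₂ < s₁) :
    (∃ q, IsMinWeightOrder (msize n m s₁ s₂) (modArc occ) q ∧
      PlacesLast q (.F ⟨n - 1, Nat.sub_lt hn one_pos⟩)) ↔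
      ∃ σ, Sat occ σ ∧ σ ⟨n - 1, Nat.sub_lt hn one_pos⟩ = true ∧
        ∀ σ', Sat occ σ' → wt σ' ≤ wt σ := by
  have hpen := penalty_add_wt (Nat.sub_lt hn one_pos)
  constructor
  · rintro ⟨q, hq, hlast⟩
    obtain ⟨τ, hτ, hmin, hiff⟩ := hq.exists_sat_penalty_le hn hsat hgroup hclause hpenalty
    refine ⟨τ, hτ, hiff.1 hlast, fun σ hσ => ?_⟩
    have := hmin σ hσ
    have := hpen τ
    have := hpen σ
    grind
  · rintro ⟨σ, hσ, hlast, hmax⟩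
    obtain ⟨q, hq⟩ := exists_isMinWeightOrder (msize n m s₁ s₂) (modArc occ)
    obtain ⟨τ, hτ, hmin, hiff⟩ := hq.exists_sat_penalty_le hn hsat hgroup hclause hpenalty
    refine ⟨q, hq, hiff.2 ?_⟩
    have := hmin σ hσ
    have := hmax τ hτ
    have := hpen τ
    have := hpen σ
    grind

lemma slaterWinner_fnSink_iff (hn : 0 < n) (hs₁ : 0 < s₁) (hs₂ : 0 < s₂) :
    SlaterWinner (arc (s₁ := s₁) (s₂ := s₂) occ) (fnSink n m s₁ s₂ hn hs₁) ↔
      ∃ q, IsMinWeightOrder (msize n m s₁ s₂) (modArc occ) q ∧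
        PlacesLast q (.F ⟨n - 1, Nat.sub_lt hn one_pos⟩) := by
  have hmsize (M : ModName n m) : 0 < msize n m s₁ s₂ M := by
    refine M.casesVarModule (fun i k => ?_) fun _ => hs₂
    rw [msize_varModule]
    exact Nat.add_pos_left hs₁ _
  have (M : ModName n m) : Nonempty (Fin (msize n m s₁ s₂ M)) := ⟨⟨0, hmsize M⟩⟩
  have htop : IsTop (fnSink n m s₁ s₂ hn hs₁).2 := fun a => Fin.le_def.2 (Nat.le_sub_one_of_lt a.2)
  have hblowUp :=
    slaterWinner_blowUp_iff (κ := fun M => Fin (msize n m s₁ s₂ M)) (R := modArc occ) htop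
  simp only [Fintype.card_fin] at hblowUp
  rw [arc_eq_blowUp]
  exact hblowUp

end Tournament

theorem stmt10_general (n m s₁ s₂ : ℕ) (hn : 0 < n) (hs₁ : 0 < s₁)
    (occ : Fin n → Fin m → Option Bool) (hsat : ∃ σ, Sat occ σ)
    (hineq1 : s₁ ^ 2 > (3 * n - 1) * m * s₁ * s₂ + 3 * n * s₁ + m ^ 2 * s₂ ^ 2 +
      9 * m * (n - 1) * s₂)
    (hineq2 : s₁ * s₂ > 3 * n * s₁ + m ^ 2 * s₂ ^ 2 + 9 * m * (n - 1) * s₂)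
    (hineq3 : s₁ > m ^ 2 * s₂ ^ 2 + 9 * m * (n - 1) * s₂) :
    SlaterWinner (arc (s₁ := s₁) (s₂ := s₂) occ) (fnSink n m s₁ s₂ hn hs₁) ↔
      ∃ σ : Fin n → Bool, Sat occ σ ∧ σ ⟨n - 1, Nat.sub_lt hn one_pos⟩ = true ∧
        ∀ σ' : Fin n → Bool, Sat occ σ' → wt σ' ≤ wt σ := by
  have hs₂ : 0 < s₂ := Nat.pos_of_mul_pos_left ((Nat.zero_le _).trans_lt hineq2)
  have hmixed : (3 * n - 1) * m * s₁ * s₂ + m * (s₁ * s₂) = 3 * n * m * (s₁ * s₂) := by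
    obtain ⟨k, hk⟩ : ∃ k, 3 * n = k + 1 := Nat.exists_eq_add_one.2 (by lia)
    rw [hk, Nat.add_sub_cancel]
    ring
  rw [slaterWinner_fnSink_iff hn hs₁ hs₂]
  exact exists_isMinWeightOrder_placesLast_iff hn hsat (by unfold slack; lia)
    (by unfold slack; lia) (by unfold slack; lia)

/-- Under the three inequalities on `s₁, s₂`, the sink of `F_n` is a Slater winner of
`T_φ` iff `φ` has a maximum-weight satisfying assignment setting `x_n` to true. -/
theorem stmt10 (n m s₁ s₂ : ℕ) (hn : 0 < n) (hm : 0 < m) (hs₁ : 0 < s₁) (hs₂ : 0 < s₂)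
    (occ : Fin n → Fin m → Option Bool)
    (h3lit : ∀ j : Fin m, ({i : Fin n | occ i j ≠ none}).ncard ≤ 3)
    (hallF : ∀ j : Fin m, ∃ i : Fin n, occ i j = some false)
    (hineq1 : s₁ ^ 2 > (3 * n - 1) * m * s₁ * s₂ + 3 * n * s₁ + m ^ 2 * s₂ ^ 2 +
      9 * m * (n - 1) * s₂)
    (hineq2 : s₁ * s₂ > 3 * n * s₁ + m ^ 2 * s₂ ^ 2 + 9 * m * (n - 1) * s₂)
    (hineq3 : s₁ > m ^ 2 * s₂ ^ 2 + 9 * m * (n - 1) * s₂) :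
    SlaterWinner (arc (s₁ := s₁) (s₂ := s₂) occ) (fnSink n m s₁ s₂ hn hs₁) ↔
      ∃ σ : Fin n → Bool, Sat occ σ ∧ σ ⟨n - 1, Nat.sub_lt hn one_pos⟩ = true ∧
        ∀ σ' : Fin n → Bool, Sat occ σ' → wt σ' ≤ wt σ :=
  stmt10_general n m s₁ s₂ hn hs₁ occ
    ⟨fun _ => false, fun j => (hallF j).imp fun _ hi => .inr ⟨hi, rfl⟩⟩ hineq1 hineq2 hineq3
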